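/- There exists an absolute constant C > 0 such that, for any q = ψ' + ψ² with ψ ∈ 𝒜(I_π) whose finiteness domain is I_d with d ≤ π, it holds λ₁(I_d, q) ≥ 3 + C(π − d)³. -/

import Mathlib

open MeasureTheory Real Set Filter
open scoped ENNReal

noncomputable section

/-- Test class for the Dirichlet eigenvalue with measure potential on `(a,b)`:
`C¹` functions vanishing outside the open interval (a core of `H¹₀`). -/
def TestFun (a b : ℝ) (v : ℝ → ℝ) : Prop :=
  ContDiff ℝ 1 v ∧ ∀ x ∉ Ioo a b, v x = 0

/-- Rayleigh quotient for the Dirichlet eigenvalue with (nonnegative, possibly infinite)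
measure potential `q` on the interval `(a,b)`. -/
def dirRQ (a b : ℝ) (q : Measure ℝ) (v : ℝ → ℝ) : ℝ≥0∞ :=
  ((∫⁻ x in Ioo a b, ENNReal.ofReal ((deriv v x) ^ 2)) +
      ∫⁻ x in Ioo a b, ENNReal.ofReal ((v x) ^ 2) ∂q) /
    ∫⁻ x in Ioo a b, ENNReal.ofReal ((v x) ^ 2)

/-- `λ₁((a,b), q)`, the first Dirichlet eigenvalue with measure potential `q`. -/
def lam1 (a b : ℝ) (q : Measure ℝ) : ℝ≥0∞ :=
  ⨅ (v : ℝ → ℝ)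
    (_ : TestFun a b v ∧ (∫⁻ x in Ioo a b, ENNReal.ofReal ((v x) ^ 2)) ≠ 0),
    dirRQ a b q v

/-- The class `𝒜(I_π)`: an increasing function `psi` with finiteness domain `dom ⊆ I_π`
(an interval), satisfying the improved-monotonicity gap condition, together with the
measure `nu` representing its distributional derivative `ψ'` on `dom`. -/
structure PsiA where
  dom : Set ℝ
  domSub : dom ⊆ Ioo (-(π / 2)) (π / 2)
  domConn : dom.OrdConnected
  psi : ℝ → ℝ
  mono : MonotoneOn psi dom
  gap : ∀ ⦃x⦄, x ∈ dom → ∀ ⦃y⦄, y ∈ dom → x < y →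
    2 * tan ((y - x) / 2) ≤ psi y - psi x
  nu : Measure ℝ
  nu_eq : ∀ ⦃x⦄, x ∈ dom → ∀ ⦃y⦄, y ∈ dom → x ≤ y →
    nu (Ioc x y) = ENNReal.ofReal (psi y - psi x)

/-- The measure `ψ'`, extended by `+∞` on `I_π \ dom ψ`. -/
def PsiA.derivM (P : PsiA) : Measure ℝ :=
  P.nu.restrict P.dom + (∞ : ℝ≥0∞) • volume.restrict (Ioo (-(π / 2)) (π / 2) \ P.dom)

/-- The measure `ψ² dx`, extended by `+∞` on `I_π \ dom ψ`. -/
def PsiA.sqM (P : PsiA) : Measure ℝ :=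
  (volume.restrict P.dom).withDensity (fun x => ENNReal.ofReal ((P.psi x) ^ 2)) +
    (∞ : ℝ≥0∞) • volume.restrict (Ioo (-(π / 2)) (π / 2) \ P.dom)

/-- The measure `q = ψ' + ψ²`, extended by `+∞` on `I_π \ dom ψ`. -/
def PsiA.qM (P : PsiA) : Measure ℝ :=
  P.nu.restrict P.dom +
    (volume.restrict P.dom).withDensity (fun x => ENNReal.ofReal ((P.psi x) ^ 2)) +
    (∞ : ℝ≥0∞) • volume.restrict (Ioo (-(π / 2)) (π / 2) \ P.dom)

/-- The function `cos² x` on `I_π`, extended by zero. -/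
def cosSq : ℝ → ℝ := fun x => if x ∈ Ioo (-(π / 2)) (π / 2) then cos x ^ 2 else 0

/-- The measure with density `1 + 2 tan² x` on `I_π`. -/
def tanWeight : Measure ℝ :=
  (volume.restrict (Ioo (-(π / 2)) (π / 2))).withDensity
    fun x => ENNReal.ofReal (1 + 2 * tan x ^ 2)

/-!
Since `q = ψ' + ψ²`, integrating by parts turns the energy `∫ v'² + ∫ v² dq` of a compactly
supported test function into `∫ (v' - ψ v)²`. By Picone's argument, with `τ = lam u / u'`, this is
at least `lam ∫ v²` as soon as `u'' = 2 ψ u' - lam u` has a solution with `u' > 0` on the support.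
Take the solution with `u' = 0` and `u < 0` at a point to the left of the support. If `u'` vanished
again, then some increment `u y - u x` would be touched from above by a multiple of
`2 F ((y - x) / 2)`, where `F'' + lam F < 2 tan F'`, and the second variation at `x < y` would
contradict the gap condition `ψ y - ψ x ≥ 2 tan ((y - x) / 2)`. The choice `F = sin` gives equality
for `lam = 3`; on an interval of length `d`, a perturbation of it gives the strict inequality for
`lam = 3 + 2 cos³ (d / 2)`, and `cos (d / 2) ≥ (π - d) / π` by Jordan's inequality. The condition
`F 0 > 0` keeps the touching pair off the diagonal.

The argument needs `ψ` continuous and `v` compactly supported: averaging `ψ` preserves the gap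
condition, and a general `v` is truncated near its zeros.
-/

lemma eventually_lt_nhdsGT_of_hasDerivAt_pos {g : ℝ → ℝ} {g' a : ℝ} (hg : HasDerivAt g g' a)
    (hpos : 0 < g') : ∀ᶠ x in nhdsWithin a (Ioi a), g a < g x := by
  have hsign := eventually_nhdsWithin_sign_eq_of_deriv_pos (f := fun x => g x - g a) (x₀ := a)
    (by rwa [(hg.sub_const _).deriv]) (sub_self _)
  filter_upwards [hsign.filter_mono nhdsWithin_le_nhds, self_mem_nhdsWithin] with x hx hax
  rwa [sign_pos (a := x - a) (sub_pos.2 hax), sign_eq_one_iff, sub_pos] at hx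

lemma eventually_lt_nhdsLT_of_hasDerivAt_neg {g : ℝ → ℝ} {g' a : ℝ} (hg : HasDerivAt g g' a)
    (hneg : g' < 0) : ∀ᶠ x in nhdsWithin a (Iio a), g a < g x := by
  have hsign := eventually_nhdsWithin_sign_eq_of_deriv_neg (f := fun x => g x - g a) (x₀ := a)
    (by rwa [(hg.sub_const _).deriv]) (sub_self _)
  filter_upwards [hsign.filter_mono nhdsWithin_le_nhds, self_mem_nhdsWithin] with x hx hax
  rwa [sign_pos (a := a - x) (sub_pos.2 hax), sign_eq_one_iff, sub_pos] at hx

lemma not_isLocalMax_of_hasDerivAt_hasDerivAt_pos {g g' : ℝ → ℝ} {g'' a : ℝ}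
    (hg : ∀ᶠ x in nhds a, HasDerivAt g (g' x) x) (hg' : HasDerivAt g' g'' a) (hpos : 0 < g'') :
    ¬ IsLocalMax g a := by
  intro hmax
  have hderiv : deriv g =ᶠ[nhds a] g' := hg.mono fun x hx => hx.deriv
  have hsecond : 0 < deriv (deriv g) a := by rwa [hderiv.deriv_eq, hg'.deriv]
  have hmin : IsLocalMin g a :=
    isLocalMin_of_deriv_deriv_pos hsecond hmax.deriv_eq_zero hg.self_of_nhds.continuousAt
  have hconst : g =ᶠ[nhds a] fun _ => g a := by
    filter_upwards [hmax, hmin] with x hle hge using le_antisymm hle hge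
  have hzero : deriv (deriv g) a = 0 := by
    have : deriv g =ᶠ[nhds a] fun _ => (0 : ℝ) := by simpa using hconst.deriv
    simpa using this.deriv_eq
  exact hsecond.ne' hzero

/-- The increments of `ψ` on `s` are bounded below by the modulus `ω`; the class `𝒜(I_π)` is the
case `ω = tan`. The factors `2` are placed so that `ω` is evaluated at half the distance. -/
def HasGapOn (ω ψ : ℝ → ℝ) (s : Set ℝ) : Prop :=
  ∀ ⦃x⦄, x ∈ s → ∀ ⦃y⦄, y ∈ s → x < y → 2 * ω ((y - x) / 2) ≤ ψ y - ψ x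

/-- `u` solves `u'' = 2 ψ u' - lam u` on `s`, written as a first-order system with `f = u'`. -/
structure IsDriftSolutionOn (ψ : ℝ → ℝ) (lam : ℝ) (s : Set ℝ) (u f : ℝ → ℝ) : Prop where
  hasDerivAt : ∀ x ∈ s, HasDerivAt u (f x) x
  hasDerivAt_flux : ∀ x ∈ s, HasDerivAt f (2 * ψ x * f x - lam * u x) x

/-- `F` is a positive increasing strict supersolution on `[0, h]` of the one-dimensional comparison
equation `F'' = 2 ω F' - lam F`; `F'` and `F''` are its first two derivatives. It serves as a
barrier for the increments of solutions with drift `ψ`, when `ψ` has gap `ω`. -/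
structure IsStrictSupersolution (ω : ℝ → ℝ) (lam h : ℝ) (F F' F'' : ℝ → ℝ) : Prop where
  hasDerivAt : ∀ s ∈ Icc 0 h, HasDerivAt F (F' s) s
  hasDerivAt_deriv : ∀ s ∈ Icc 0 h, HasDerivAt F' (F'' s) s
  pos : ∀ s ∈ Icc 0 h, 0 < F s
  deriv_pos : ∀ s ∈ Icc 0 h, 0 < F' s
  strict : ∀ s ∈ Icc 0 h, lam * F s + F'' s < 2 * ω s * F' s

lemma HasGapOn.mono {ω ψ : ℝ → ℝ} {s t : Set ℝ} (h : HasGapOn ω ψ t) (hst : s ⊆ t) :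
    HasGapOn ω ψ s :=
  fun _ hx _ hy hxy => h (hst hx) (hst hy) hxy

lemma HasGapOn.congr {ω ψ φ : ℝ → ℝ} {s : Set ℝ} (h : HasGapOn ω ψ s) (heq : EqOn ψ φ s) :
    HasGapOn ω φ s := by
  intro x hx y hy hxy
  rw [← heq hx, ← heq hy]
  exact h hx hy hxy

lemma IsDriftSolutionOn.mono {ψ u f : ℝ → ℝ} {lam : ℝ} {s t : Set ℝ}
    (h : IsDriftSolutionOn ψ lam t u f) (hst : s ⊆ t) : IsDriftSolutionOn ψ lam s u f :=
  ⟨fun x hx => h.hasDerivAt x (hst hx), fun x hx => h.hasDerivAt_flux x (hst hx)⟩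

lemma IsStrictSupersolution.mono {ω F F' F'' : ℝ → ℝ} {lam h k : ℝ}
    (hF : IsStrictSupersolution ω lam k F F' F'') (hhk : h ≤ k) :
    IsStrictSupersolution ω lam h F F' F'' := by
  have hsub : Icc 0 h ⊆ Icc 0 k := Icc_subset_Icc_right hhk
  exact ⟨fun s hs => hF.hasDerivAt s (hsub hs), fun s hs => hF.hasDerivAt_deriv s (hsub hs),
    fun s hs => hF.pos s (hsub hs), fun s hs => hF.deriv_pos s (hsub hs),
    fun s hs => hF.strict s (hsub hs)⟩

section TwoPointComparison

variable {ω ψ u f F F' F'' : ℝ → ℝ} {lam m p q x₀ y₀ : ℝ}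

/-- `m` is the least multiple of the barrier `F` dominating all increments of `u` on `[p, q]`, and
it is attained by the increment between `x₀` and `y₀`. -/
structure IsTouchingPair (u F : ℝ → ℝ) (m p q x₀ y₀ : ℝ) : Prop where
  pos : 0 < m
  left_mem : p ≤ x₀
  lt : x₀ < y₀
  right_mem : y₀ ≤ q
  eq : u y₀ - u x₀ = 2 * m * F ((y₀ - x₀) / 2)
  le : ∀ ⦃x y⦄, p ≤ x → x ≤ y → y ≤ q → u y - u x ≤ 2 * m * F ((y - x) / 2)

lemma exists_isTouchingPair (hu : ContinuousOn u (Icc p q))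
    (hF : ContinuousOn F (Icc 0 ((q - p) / 2))) (hpos : ∀ s ∈ Icc 0 ((q - p) / 2), 0 < F s)
    (hanti : ¬ AntitoneOn u (Icc p q)) : ∃ m x₀ y₀, IsTouchingPair u F m p q x₀ y₀ := by
  simp only [AntitoneOn, not_forall, not_le] at hanti
  obtain ⟨x₁, hx₁, y₁, hy₁, hxy₁, hlt₁⟩ := hanti
  let D : Set (ℝ × ℝ) := (Icc p q ×ˢ Icc p q) ∩ {z | z.1 ≤ z.2}
  have hD : IsCompact D := (isCompact_Icc.prod isCompact_Icc).inter_right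
    (isClosed_le continuous_fst continuous_snd)
  have hhalf : ∀ z ∈ D, (z.2 - z.1) / 2 ∈ Icc 0 ((q - p) / 2) := fun z hz =>
    ⟨by linarith [show z.1 ≤ z.2 from hz.2], by linarith [hz.1.1.1, hz.1.2.2]⟩
  have hFD : ∀ z ∈ D, 0 < 2 * F ((z.2 - z.1) / 2) := fun z hz =>
    mul_pos two_pos (hpos _ (hhalf z hz))
  have hcont : ContinuousOn (fun z : ℝ × ℝ => (u z.2 - u z.1) / (2 * F ((z.2 - z.1) / 2))) D := by
    refine ContinuousOn.div ?_ ?_ fun z hz => (hFD z hz).ne'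
    · exact (hu.comp continuous_snd.continuousOn fun z hz => hz.1.2).sub
        (hu.comp continuous_fst.continuousOn fun z hz => hz.1.1)
    · exact continuousOn_const.mul (hF.comp (by fun_prop) hhalf)
  obtain ⟨⟨x₀, y₀⟩, hz₀, hmax⟩ := hD.exists_isMaxOn ⟨(x₁, y₁), ⟨hx₁, hy₁⟩, hxy₁⟩ hcont
  set m := (u y₀ - u x₀) / (2 * F ((y₀ - x₀) / 2))
  have hm : 0 < m :=
    (div_pos (sub_pos.2 hlt₁) (hFD _ ⟨⟨hx₁, hy₁⟩, hxy₁⟩)).trans_le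
      (hmax (show (x₁, y₁) ∈ D from ⟨⟨hx₁, hy₁⟩, hxy₁⟩))
  have heq : u y₀ - u x₀ = 2 * m * F ((y₀ - x₀) / 2) := by
    rw [mul_right_comm, mul_comm, div_mul_cancel₀ _ (hFD _ hz₀).ne']
  have hne : x₀ ≠ y₀ := by
    rintro rfl
    rw [sub_self] at heq
    exact (mul_pos (mul_pos two_pos hm) (hpos _ (hhalf _ hz₀))).ne heq
  refine ⟨m, x₀, y₀, hm, hz₀.1.1.1, lt_of_le_of_ne hz₀.2 hne, hz₀.1.2.2, heq, ?_⟩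
  intro x y hpx hxy hyq
  have hz : (x, y) ∈ D := ⟨⟨⟨hpx, hxy.trans hyq⟩, ⟨hpx.trans hxy, hyq⟩⟩, hxy⟩
  have hle : (u y - u x) / (2 * F ((y - x) / 2)) ≤ m := hmax hz
  rw [div_le_iff₀ (hFD _ hz)] at hle
  linarith

lemma IsDriftSolutionOn.hasDerivAt_flux_spread {S : Set ℝ} {s F₂ : ℝ}
    (hu : IsDriftSolutionOn ψ lam S u f) (hx₀ : x₀ ∈ S) (hy₀ : y₀ ∈ S)
    (hF' : HasDerivAt F' F₂ s) :
    HasDerivAt (fun t => f (y₀ + t) + f (x₀ - t) - 2 * m * F' (s + t))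
      (2 * ψ y₀ * f y₀ - lam * u y₀ - (2 * ψ x₀ * f x₀ - lam * u x₀) - 2 * m * F₂) 0 := by
  have hfy := hu.hasDerivAt_flux y₀ hy₀
  have hfx := hu.hasDerivAt_flux x₀ hx₀
  rw [← add_zero y₀] at hfy
  rw [← sub_zero x₀] at hfx
  rw [← add_zero s] at hF'
  refine (((hfy.comp_const_add y₀ 0).add (hfx.comp_const_sub x₀ 0)).sub
    ((hF'.comp_const_add s 0).const_mul (2 * m))).congr_deriv ?_
  simp only [add_zero, sub_zero]
  ring

namespace IsTouchingPair

lemma half_mem (ht : IsTouchingPair u F m p q x₀ y₀) : (y₀ - x₀) / 2 ∈ Icc 0 ((q - p) / 2) :=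
  ⟨by linarith [ht.lt], by linarith [ht.left_mem, ht.right_mem]⟩

lemma mul_deriv_le_left {u' F' : ℝ} (ht : IsTouchingPair u F m p q x₀ y₀)
    (hu : HasDerivAt u u' x₀) (hF : HasDerivAt F F' ((y₀ - x₀) / 2)) : m * F' ≤ u' := by
  by_contra! hlt
  have hg : HasDerivAt (fun x => u y₀ - u x - 2 * m * F ((y₀ - x) / 2)) (m * F' - u') x₀ := by
    refine ((hu.const_sub (u y₀)).sub ((hF.comp x₀
      (((hasDerivAt_id x₀).const_sub y₀).div_const 2)).const_mul (2 * m))).congr_deriv ?_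
    ring
  obtain ⟨x, hgx, hx₀x, hxy₀⟩ := ((eventually_lt_nhdsGT_of_hasDerivAt_pos hg (sub_pos.2 hlt)).and
    (Ioo_mem_nhdsGT ht.lt)).exists
  linarith [ht.eq, ht.le (ht.left_mem.trans hx₀x.le) hxy₀.le ht.right_mem]

lemma mul_deriv_le_right {u' F' : ℝ} (ht : IsTouchingPair u F m p q x₀ y₀)
    (hu : HasDerivAt u u' y₀) (hF : HasDerivAt F F' ((y₀ - x₀) / 2)) : m * F' ≤ u' := by
  by_contra! hlt
  have hg : HasDerivAt (fun y => u y - u x₀ - 2 * m * F ((y - x₀) / 2)) (u' - m * F') y₀ := by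
    refine ((hu.sub_const (u x₀)).sub ((hF.comp y₀
      (((hasDerivAt_id y₀).sub_const x₀).div_const 2)).const_mul (2 * m))).congr_deriv ?_
    ring
  obtain ⟨y, hgy, hx₀y, hyy₀⟩ := ((eventually_lt_nhdsLT_of_hasDerivAt_neg hg (sub_neg.2 hlt)).and
    (Ioo_mem_nhdsLT ht.lt)).exists
  linarith [ht.eq, ht.le ht.left_mem hx₀y.le (hyy₀.le.trans ht.right_mem)]

lemma isLocalMax_spread (ht : IsTouchingPair u F m p q x₀ y₀) (hp : p < x₀) (hq : y₀ < q) :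
    IsLocalMax (fun t => u (y₀ + t) - u (x₀ - t) - 2 * m * F ((y₀ - x₀) / 2 + t)) 0 := by
  have hx : Tendsto (fun t => x₀ - t) (nhds 0) (nhds x₀) :=
    (continuous_sub_left x₀).tendsto' 0 x₀ (sub_zero x₀)
  have hy : Tendsto (fun t => y₀ + t) (nhds 0) (nhds y₀) :=
    (continuous_const_add y₀).tendsto' 0 y₀ (add_zero y₀)
  filter_upwards [hx.eventually (lt_mem_nhds hp), hy.eventually (gt_mem_nhds hq),
    hx.eventually_lt hy ht.lt] with t hpt hqt hlt
  have hle := ht.le hpt.le hlt.le hqt.le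
  have hhalf : (y₀ + t - (x₀ - t)) / 2 = (y₀ - x₀) / 2 + t := by ring
  rw [hhalf] at hle
  simp only [add_zero, sub_zero, ht.eq, sub_self]
  linarith

lemma spread_variation (ht : IsTouchingPair u F m p q x₀ y₀)
    (hF : IsStrictSupersolution ω lam ((q - p) / 2) F F' F'')
    (hu : IsDriftSolutionOn ψ lam (Icc p q) u f) (hp : p < x₀) (hq : y₀ < q) :
    f y₀ + f x₀ = 2 * m * F' ((y₀ - x₀) / 2) ∧
      2 * ψ y₀ * f y₀ - lam * u y₀ - (2 * ψ x₀ * f x₀ - lam * u x₀)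
        ≤ 2 * m * F'' ((y₀ - x₀) / 2) := by
  set s := (y₀ - x₀) / 2
  have hs : s ∈ Ioo 0 ((q - p) / 2) := ⟨half_pos (sub_pos.2 ht.lt), by simp only [s]; linarith⟩
  have hx₀ : x₀ ∈ Ioo p q := ⟨hp, ht.lt.trans hq⟩
  have hy₀ : y₀ ∈ Ioo p q := ⟨hp.trans ht.lt, hq⟩
  have hmax := ht.isLocalMax_spread hp hq
  have hy : Tendsto (fun t => y₀ + t) (nhds 0) (nhds y₀) :=
    (continuous_const_add y₀).tendsto' 0 y₀ (add_zero y₀)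
  have hx : Tendsto (fun t => x₀ - t) (nhds 0) (nhds x₀) :=
    (continuous_sub_left x₀).tendsto' 0 x₀ (sub_zero x₀)
  have hst : Tendsto (fun t => s + t) (nhds 0) (nhds s) :=
    (continuous_const_add s).tendsto' 0 s (add_zero s)
  have hderiv : ∀ᶠ t in nhds 0, HasDerivAt
      (fun t => u (y₀ + t) - u (x₀ - t) - 2 * m * F (s + t))
      (f (y₀ + t) + f (x₀ - t) - 2 * m * F' (s + t)) t := by
    filter_upwards [hy.eventually (Icc_mem_nhds hy₀.1 hy₀.2),
      hx.eventually (Icc_mem_nhds hx₀.1 hx₀.2),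
      hst.eventually (Icc_mem_nhds hs.1 hs.2)] with t hyt hxt hFt
    refine ((((hu.hasDerivAt _ hyt).comp_const_add y₀ t).sub
      ((hu.hasDerivAt _ hxt).comp_const_sub x₀ t)).sub
      (((hF.hasDerivAt _ hFt).comp_const_add s t).const_mul (2 * m))).congr_deriv ?_
    ring
  have hderiv₂ := hu.hasDerivAt_flux_spread (m := m) (Ioo_subset_Icc_self hx₀)
    (Ioo_subset_Icc_self hy₀) (hF.hasDerivAt_deriv s (Ioo_subset_Icc_self hs))
  constructor
  · have := hmax.hasDerivAt_eq_zero hderiv.self_of_nhds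
    simp only [add_zero, sub_zero] at this
    linarith
  · by_contra! hlt
    exact not_isLocalMax_of_hasDerivAt_hasDerivAt_pos hderiv hderiv₂ (sub_pos.2 hlt) hmax

end IsTouchingPair

theorem IsDriftSolutionOn.antitoneOn (hu : IsDriftSolutionOn ψ lam (Icc p q) u f)
    (hF : IsStrictSupersolution ω lam ((q - p) / 2) F F' F'') (hψ : HasGapOn ω ψ (Icc p q))
    (hp : f p ≤ 0) (hq : f q ≤ 0) : AntitoneOn u (Icc p q) := by
  by_contra hanti
  obtain ⟨m, x₀, y₀, ht⟩ := exists_isTouchingPair (HasDerivAt.continuousOn hu.hasDerivAt)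
    (HasDerivAt.continuousOn hF.hasDerivAt) hF.pos hanti
  set s := (y₀ - x₀) / 2
  have hs : s ∈ Icc 0 ((q - p) / 2) := ht.half_mem
  have hx₀ : x₀ ∈ Icc p q := ⟨ht.left_mem, ht.lt.le.trans ht.right_mem⟩
  have hy₀ : y₀ ∈ Icc p q := ⟨ht.left_mem.trans ht.lt.le, ht.right_mem⟩
  have hfx : m * F' s ≤ f x₀ := ht.mul_deriv_le_left (hu.hasDerivAt _ hx₀) (hF.hasDerivAt s hs)
  have hfy : m * F' s ≤ f y₀ := ht.mul_deriv_le_right (hu.hasDerivAt _ hy₀) (hF.hasDerivAt s hs)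
  have hflux : 0 < m * F' s := mul_pos ht.pos (hF.deriv_pos s hs)
  have hpx : p < x₀ := lt_of_le_of_ne ht.left_mem (by rintro rfl; linarith)
  have hyq : y₀ < q := lt_of_le_of_ne ht.right_mem (by rintro rfl; linarith)
  obtain ⟨hsum, hsecond⟩ := ht.spread_variation hF hu hpx hyq
  have hfx_eq : f x₀ = m * F' s := by linarith
  have hfy_eq : f y₀ = m * F' s := by linarith
  have hgap := mul_le_mul_of_nonneg_left (hψ hx₀ hy₀ ht.lt) hflux.le
  have hstrict := mul_lt_mul_of_pos_left (hF.strict s hs) ht.pos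
  have hincr : lam * (u y₀ - u x₀) = lam * (2 * m * F s) := by rw [ht.eq]
  rw [hfx_eq, hfy_eq] at hsecond
  linarith

end TwoPointComparison

section Pruefer

variable {ψ : ℝ → ℝ} {lam a b t₀ : ℝ}

/-- The angular velocity of `(f, u)` in polar coordinates, `(f, u) = r (cos θ, sin θ)`, for the
system of `IsDriftSolutionOn`. Unlike the linear system itself it is bounded, so the local
Picard–Lindelöf theorem yields solutions on the whole interval. -/
def prueferField (ψ : ℝ → ℝ) (lam t θ : ℝ) : ℝ :=
  cos θ ^ 2 - 2 * ψ t * (sin θ * cos θ) + lam * sin θ ^ 2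

lemma abs_sin_mul_cos_le_one (θ : ℝ) : |sin θ * cos θ| ≤ 1 := by
  rw [abs_mul]
  exact mul_le_one₀ (abs_sin_le_one θ) (abs_nonneg _) (abs_cos_le_one θ)

lemma abs_prueferField_le (t θ : ℝ) : |prueferField ψ lam t θ| ≤ 1 + 2 * |ψ t| + |lam| := by
  have hcos : |cos θ ^ 2| ≤ 1 := by rw [abs_sq]; exact cos_sq_le_one θ
  have hmid : |2 * ψ t * (sin θ * cos θ)| ≤ 2 * |ψ t| := by
    rw [abs_mul, abs_mul, abs_two]
    exact mul_le_of_le_one_right (by positivity) (abs_sin_mul_cos_le_one θ)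
  have hsin : |lam * sin θ ^ 2| ≤ |lam| := by
    rw [abs_mul, abs_sq]
    exact mul_le_of_le_one_right (abs_nonneg _) (sin_sq_le_one θ)
  calc |prueferField ψ lam t θ|
      ≤ |cos θ ^ 2| + |2 * ψ t * (sin θ * cos θ)| + |lam * sin θ ^ 2| :=
        (abs_add_le _ _).trans (add_le_add_left (abs_sub _ _) _)
    _ ≤ 1 + 2 * |ψ t| + |lam| := by gcongr

lemma hasDerivAt_prueferField (t θ : ℝ) : HasDerivAt (prueferField ψ lam t)
    (2 * (lam - 1) * (sin θ * cos θ) - 2 * ψ t * cos (2 * θ)) θ := by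
  refine ((((hasDerivAt_cos θ).pow 2).sub
    (((hasDerivAt_sin θ).mul (hasDerivAt_cos θ)).const_mul (2 * ψ t))).add
    (((hasDerivAt_sin θ).pow 2).const_mul lam)).congr_deriv ?_
  rw [cos_two_mul']
  push_cast
  ring

lemma lipschitzWith_prueferField {B : NNReal} {t : ℝ} (hB : |ψ t| ≤ B) :
    LipschitzWith (2 * ‖lam - 1‖₊ + 2 * B) (prueferField ψ lam t) := by
  refine lipschitzWith_of_nnnorm_deriv_le
    (fun θ => (hasDerivAt_prueferField t θ).differentiableAt) fun θ => ?_
  rw [(hasDerivAt_prueferField t θ).deriv, ← NNReal.coe_le_coe, coe_nnnorm, Real.norm_eq_abs]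
  push_cast
  calc |2 * (lam - 1) * (sin θ * cos θ) - 2 * ψ t * cos (2 * θ)|
      ≤ |2 * (lam - 1) * (sin θ * cos θ)| + |2 * ψ t * cos (2 * θ)| := abs_sub _ _
    _ = 2 * |lam - 1| * |sin θ * cos θ| + 2 * |ψ t| * |cos (2 * θ)| := by
        simp only [abs_mul, abs_two]
    _ ≤ 2 * ‖lam - 1‖ * 1 + 2 * B * 1 := by
        rw [Real.norm_eq_abs]
        gcongr
        exacts [abs_sin_mul_cos_le_one θ, abs_cos_le_one _]
    _ = 2 * ‖lam - 1‖ + 2 * B := by ring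

lemma exists_prueferAngle (hψ : ContinuousOn ψ (Icc a b)) (ht₀ : t₀ ∈ Ioo a b) (θ₀ : ℝ) :
    ∃ θ : ℝ → ℝ, θ t₀ = θ₀ ∧
      ∀ t ∈ Ioo a b, HasDerivAt θ (prueferField ψ lam t (θ t)) t := by
  obtain ⟨B, hB⟩ := isCompact_Icc.exists_bound_of_continuousOn hψ
  lift B to NNReal using (norm_nonneg _).trans (hB t₀ (Ioo_subset_Icc_self ht₀))
  let L : NNReal := 1 + 2 * B + ‖lam‖₊
  have hPL : IsPicardLindelof (prueferField ψ lam) (⟨t₀, Ioo_subset_Icc_self ht₀⟩ : Icc a b) θ₀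
      (L * Real.toNNReal (b - a)) 0 L (2 * ‖lam - 1‖₊ + 2 * B) := by
    refine ⟨fun t ht => (lipschitzWith_prueferField (hB t ht)).lipschitzOnWith, fun θ _ => ?_,
      fun t ht θ _ => ?_, ?_⟩
    · unfold prueferField
      fun_prop
    · refine (abs_prueferField_le t θ).trans ?_
      have := hB t ht
      rw [Real.norm_eq_abs] at this
      simp only [L, NNReal.coe_add, NNReal.coe_mul, coe_nnnorm, Real.norm_eq_abs]
      push_cast
      gcongr
    · push_cast
      rw [sub_zero, Real.coe_toNNReal _ (by linarith [ht₀.1, ht₀.2])]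
      gcongr
      exact max_le (by linarith [ht₀.1]) (by linarith [ht₀.2])
  obtain ⟨θ, hθ₀, hθ⟩ := hPL.exists_eq_forall_mem_Icc_hasDerivWithinAt₀
  exact ⟨θ, hθ₀, fun t ht =>
    (hθ t (Ioo_subset_Icc_self ht)).hasDerivAt (Icc_mem_nhds ht.1 ht.2)⟩

lemma hasDerivAt_intervalIntegral_of_continuousOn_Ioo {g : ℝ → ℝ} (hg : ContinuousOn g (Ioo a b))
    (ht₀ : t₀ ∈ Ioo a b) {t : ℝ} (ht : t ∈ Ioo a b) :
    HasDerivAt (fun s => ∫ x in t₀..s, g x) (g t) t :=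
  intervalIntegral.integral_hasDerivAt_right
    (hg.mono (ordConnected_Ioo.uIcc_subset ht₀ ht)).intervalIntegrable
    (hg.stronglyMeasurableAtFilter isOpen_Ioo t ht) (hg.continuousAt (Ioo_mem_nhds ht.1 ht.2))

theorem exists_isDriftSolutionOn (hψ : ContinuousOn ψ (Icc a b)) (lam : ℝ) (ht₀ : t₀ ∈ Ioo a b)
    (u₀ f₀ : ℝ) : ∃ u f, IsDriftSolutionOn ψ lam (Ioo a b) u f ∧ u t₀ = u₀ ∧ f t₀ = f₀ := by
  let z : ℂ := ⟨f₀, u₀⟩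
  obtain ⟨θ, hθ₀, hθ⟩ := exists_prueferAngle (lam := lam) hψ ht₀ z.arg
  let g : ℝ → ℝ := fun t => (1 - lam) * (sin (θ t) * cos (θ t)) + 2 * ψ t * cos (θ t) ^ 2
  have hgc : ContinuousOn g (Ioo a b) := by
    have hθc : ContinuousOn θ (Ioo a b) := HasDerivAt.continuousOn hθ
    have hψc : ContinuousOn ψ (Ioo a b) := hψ.mono Ioo_subset_Icc_self
    simp only [g]
    fun_prop
  let R : ℝ → ℝ := fun t => ‖z‖ * exp (∫ x in t₀..t, g x)
  have hR : ∀ t ∈ Ioo a b, HasDerivAt R (R t * g t) t := fun t ht =>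
    ((hasDerivAt_intervalIntegral_of_continuousOn_Ioo hgc ht₀ ht).exp.const_mul ‖z‖).congr_deriv
      (mul_assoc _ _ _).symm
  have hRt₀ : R t₀ = ‖z‖ := by simp [R]
  refine ⟨fun t => R t * sin (θ t), fun t => R t * cos (θ t),
    ⟨fun t ht => ?_, fun t ht => ?_⟩, ?_, ?_⟩
  · refine ((hR t ht).mul (hθ t ht).sin).congr_deriv ?_
    simp only [g, prueferField]
    linear_combination R t * cos (θ t) * sin_sq_add_cos_sq (θ t)
  · refine ((hR t ht).mul (hθ t ht).cos).congr_deriv ?_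
    simp only [g, prueferField]
    linear_combination
      R t * (2 * ψ t * cos (θ t) - lam * sin (θ t)) * sin_sq_add_cos_sq (θ t)
  · simp only [hRt₀, hθ₀, Complex.norm_mul_sin_arg, z]
  · simp only [hRt₀, hθ₀, Complex.norm_mul_cos_arg, z]

end Pruefer

section Picone

variable {ω ψ u f v τ F F' F'' : ℝ → ℝ} {lam p q a b : ℝ}

theorem IsDriftSolutionOn.flux_pos (hu : IsDriftSolutionOn ψ lam (Icc p q) u f)
    (hF : IsStrictSupersolution ω lam ((q - p) / 2) F F' F'') (hψ : HasGapOn ω ψ (Icc p q))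
    (hfp : f p = 0) (hup : lam * u p < 0) {x : ℝ} (hx : x ∈ Ioc p q) : 0 < f x := by
  by_contra! hfx
  have hsub : Icc p x ⊆ Icc p q := Icc_subset_Icc_right hx.2
  have hanti : AntitoneOn u (Icc p x) :=
    (hu.mono hsub).antitoneOn (hF.mono (by linarith [hx.2])) (hψ.mono hsub) hfp.le hfx
  have hfp' := hu.hasDerivAt_flux p ⟨le_rfl, hx.1.le.trans hx.2⟩
  obtain ⟨y, hfy, hpy, hyx⟩ := ((eventually_lt_nhdsGT_of_hasDerivAt_pos hfp'
    (by rw [hfp]; linarith)).and (Ioo_mem_nhdsGT hx.1)).exists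
  rw [hfp] at hfy
  obtain ⟨z, hyz, hz⟩ := ((eventually_lt_nhdsGT_of_hasDerivAt_pos
    (hu.hasDerivAt y (hsub ⟨hpy.le, hyx.le⟩)) hfy).and (Ioo_mem_nhdsGT hyx)).exists
  exact hyz.not_ge (hanti ⟨hpy.le, hyx.le⟩ ⟨hpy.le.trans hz.1.le, hz.2.le⟩ hz.1.le)

/-- Picone's argument: with this `τ` the integrands differ by a square and the derivative of
`τ v ^ 2`. -/
lemma integral_sq_le_of_riccati (hab : a ≤ b) (hψ : ContinuousOn ψ (Icc a b))
    (hτ : ∀ x ∈ Icc a b, HasDerivAt τ (lam - 2 * ψ x * τ x + τ x ^ 2) x)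
    (hv : ContDiff ℝ 1 v) (hva : v a = 0) (hvb : v b = 0) :
    lam * ∫ x in a..b, v x ^ 2 ≤ ∫ x in a..b, (deriv v x - ψ x * v x) ^ 2 := by
  have hvc : ContinuousOn v (Icc a b) := hv.continuous.continuousOn
  have hv'c : ContinuousOn (deriv v) (Icc a b) := hv.continuous_deriv_one.continuousOn
  have hτc : ContinuousOn τ (Icc a b) := HasDerivAt.continuousOn hτ
  let W : ℝ → ℝ := fun x =>
    (lam - 2 * ψ x * τ x + τ x ^ 2) * v x ^ 2 + τ x * (2 * v x * deriv v x)
  have hW : ∀ x ∈ Icc a b, HasDerivAt (fun x => τ x * v x ^ 2) (W x) x := fun x hx => by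
    refine ((hτ x hx).mul ((hv.differentiable one_ne_zero x).hasDerivAt.pow 2)).congr_deriv ?_
    simp only [W, Pi.pow_apply]
    push_cast
    ring
  rw [← uIcc_of_le hab] at hψ hvc hv'c hτc hW
  have hWi : IntervalIntegrable W volume a b := by
    apply ContinuousOn.intervalIntegrable
    fun_prop
  have hW0 : ∫ x in a..b, W x = 0 := by
    rw [intervalIntegral.integral_eq_sub_of_hasDerivAt hW hWi, hva, hvb]
    ring
  have hsq : IntervalIntegrable (fun x => lam * v x ^ 2) volume a b := by
    apply ContinuousOn.intervalIntegrable
    fun_prop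
  calc lam * ∫ x in a..b, v x ^ 2
      = ∫ x in a..b, (lam * v x ^ 2 - W x) := by
        rw [intervalIntegral.integral_sub hsq hWi, hW0, sub_zero,
          intervalIntegral.integral_const_mul]
    _ ≤ ∫ x in a..b, (deriv v x - ψ x * v x) ^ 2 := by
        refine intervalIntegral.integral_mono_on hab (hsq.sub hWi) ?_ fun x _ => ?_
        · apply ContinuousOn.intervalIntegrable
          fun_prop
        · have : 0 ≤ (deriv v x - ψ x * v x + τ x * v x) ^ 2 := sq_nonneg _
          simp only [W]
          linarith

theorem integral_sq_le_of_continuous_gap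
    (hF : IsStrictSupersolution ω lam ((b - p) / 2) F F' F'') (hlam : 0 < lam)
    (hψ : Continuous ψ) (hgap : HasGapOn ω ψ (Icc p b)) (hpa : p < a) (hab : a ≤ b)
    (hv : ContDiff ℝ 1 v) (hva : v a = 0) (hvb : v b = 0) :
    lam * ∫ x in a..b, v x ^ 2 ≤ ∫ x in a..b, (deriv v x - ψ x * v x) ^ 2 := by
  obtain ⟨u, f, hu, hup, hfp⟩ := exists_isDriftSolutionOn (a := p - 1) (b := b + 1) (t₀ := p)
    hψ.continuousOn lam ⟨by linarith, by linarith⟩ (-1) 0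
  replace hu : IsDriftSolutionOn ψ lam (Icc p b) u f :=
    hu.mono (Icc_subset_Ioo (by linarith) (by linarith))
  refine integral_sq_le_of_riccati (τ := fun x => lam * u x / f x) hab hψ.continuousOn
    (fun x hx => ?_) hv hva hvb
  have hxp : x ∈ Icc p b := ⟨hpa.le.trans hx.1, hx.2⟩
  have hfx : 0 < f x :=
    hu.flux_pos hF hgap hfp (by rw [hup]; linarith) ⟨hpa.trans_le hx.1, hx.2⟩
  refine (((hu.hasDerivAt x hxp).const_mul lam).div (hu.hasDerivAt_flux x hxp)
    hfx.ne').congr_deriv ?_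
  field_simp
  ring

end Picone

section Steklov

variable {ω ψ v F F' F'' : ℝ → ℝ} {lam p q a b ε : ℝ}

/-- The forward Steklov mean, a continuous approximation that inherits gap conditions. -/
def steklovMean (ε : ℝ) (ψ : ℝ → ℝ) (x : ℝ) : ℝ :=
  ε⁻¹ * ∫ t in x..(x + ε), ψ t

lemma continuous_steklovMean (hψ : ∀ a b, IntervalIntegrable ψ volume a b) :
    Continuous (steklovMean ε ψ) := by
  have hprim : Continuous fun x => ∫ t in (0 : ℝ)..x, ψ t :=
    intervalIntegral.continuous_primitive hψ 0
  have heq : steklovMean ε ψ =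
      fun x => ε⁻¹ * ((∫ t in (0 : ℝ)..(x + ε), ψ t) - ∫ t in (0 : ℝ)..x, ψ t) := by
    funext x
    rw [steklovMean, intervalIntegral.integral_interval_sub_left (hψ _ _) (hψ _ _)]
  rw [heq]
  exact continuous_const.mul ((hprim.comp (continuous_add_const ε)).sub hprim)

lemma steklovMean_const (hε : ε ≠ 0) (c x : ℝ) : steklovMean ε (fun _ => c) x = c := by
  rw [steklovMean, intervalIntegral.integral_const, add_sub_cancel_left, smul_eq_mul,
    inv_mul_cancel_left₀ hε]

lemma steklovMean_mono_on {φ : ℝ → ℝ} {x : ℝ} (hε : 0 < ε)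
    (hψ : IntervalIntegrable ψ volume x (x + ε)) (hφ : IntervalIntegrable φ volume x (x + ε))
    (hle : ∀ t ∈ Icc x (x + ε), ψ t ≤ φ t) : steklovMean ε ψ x ≤ steklovMean ε φ x :=
  mul_le_mul_of_nonneg_left
    (intervalIntegral.integral_mono_on (by linarith) hψ hφ hle) (inv_nonneg.2 hε.le)

lemma le_steklovMean_of_monotone (hψ : Monotone ψ) (hε : 0 < ε) (x : ℝ) :
    ψ x ≤ steklovMean ε ψ x := by
  rw [← steklovMean_const hε.ne' (ψ x) x]
  exact steklovMean_mono_on hε intervalIntegrable_const hψ.intervalIntegrable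
    fun t ht => hψ ht.1

lemma steklovMean_le_of_monotone (hψ : Monotone ψ) (hε : 0 < ε) (x : ℝ) :
    steklovMean ε ψ x ≤ ψ (x + ε) := by
  rw [← steklovMean_const hε.ne' (ψ (x + ε)) x]
  exact steklovMean_mono_on hε hψ.intervalIntegrable intervalIntegrable_const
    fun t ht => hψ ht.2

lemma steklovMean_sub_steklovMean (hψ : ∀ a b, IntervalIntegrable ψ volume a b) (x y : ℝ) :
    steklovMean ε ψ y - steklovMean ε ψ x = steklovMean ε (fun t => ψ (t + (y - x)) - ψ t) x := by
  have hshift : IntervalIntegrable (fun t => ψ (t + (y - x))) volume x (x + ε) := by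
    simpa using (hψ (x + (y - x)) (x + ε + (y - x))).comp_add_right (y - x)
  simp only [steklovMean]
  rw [intervalIntegral.integral_sub hshift (hψ _ _), intervalIntegral.integral_comp_add_right,
    show x + (y - x) = y by ring, show x + ε + (y - x) = y + ε by ring, mul_sub]

lemma HasGapOn.steklovMean (hgap : HasGapOn ω ψ (Icc p (q + ε)))
    (hψ : ∀ a b, IntervalIntegrable ψ volume a b) (hε : 0 < ε) :
    HasGapOn ω (steklovMean ε ψ) (Icc p q) := by
  intro x hx y hy hxy
  have hshift : IntervalIntegrable (fun t => ψ (t + (y - x))) volume x (x + ε) := by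
    simpa using (hψ (x + (y - x)) (x + ε + (y - x))).comp_add_right (y - x)
  rw [steklovMean_sub_steklovMean hψ, ← steklovMean_const hε.ne' (2 * ω ((y - x) / 2)) x]
  refine steklovMean_mono_on hε intervalIntegrable_const (hshift.sub (hψ _ _)) fun t ht => ?_
  have htp : t ∈ Icc p (q + ε) := ⟨hx.1.trans ht.1, by linarith [ht.2, hx.2]⟩
  have htq : t + (y - x) ∈ Icc p (q + ε) := ⟨by linarith [hx.1, ht.1], by linarith [ht.2, hy.2]⟩
  simpa using hgap htp htq (by linarith)

lemma tendsto_steklovMean_of_continuousAt (hψ : Monotone ψ) {x : ℝ} (hx : ContinuousAt ψ x) :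
    Tendsto (fun ε => steklovMean ε ψ x) (nhdsWithin 0 (Ioi 0)) (nhds (ψ x)) := by
  have hshift : Tendsto (fun ε => ψ (x + ε)) (nhdsWithin 0 (Ioi 0)) (nhds (ψ x)) :=
    (hx.tendsto.comp ((continuous_const_add x).tendsto' 0 x (add_zero x))).mono_left
      nhdsWithin_le_nhds
  refine tendsto_of_tendsto_of_tendsto_of_le_of_le' tendsto_const_nhds hshift ?_ ?_ <;>
    filter_upwards [self_mem_nhdsWithin] with ε hε
  exacts [le_steklovMean_of_monotone hψ hε x, steklovMean_le_of_monotone hψ hε x]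

lemma tendsto_integral_sq_sub_steklovMean_mul (hψ : Monotone ψ) {g : ℝ → ℝ} (hg : Continuous g)
    (hv : Continuous v) (hab : a ≤ b) :
    Tendsto (fun ε => ∫ x in a..b, (g x - steklovMean ε ψ x * v x) ^ 2) (nhdsWithin 0 (Ioi 0))
      (nhds (∫ x in a..b, (g x - ψ x * v x) ^ 2)) := by
  let B : ℝ := max |ψ a| |ψ (b + 1)|
  refine intervalIntegral.tendsto_integral_filter_of_dominated_convergence
    (fun x => (|g x| + B * |v x|) ^ 2) ?_ ?_ ?_ ?_
  · refine Eventually.of_forall fun ε => Continuous.aestronglyMeasurable ?_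
    have := continuous_steklovMean (ε := ε) (ψ := ψ) fun _ _ => hψ.intervalIntegrable
    fun_prop
  · filter_upwards [Ioo_mem_nhdsGT zero_lt_one] with ε hε
    refine Eventually.of_forall fun x hx => ?_
    rw [uIoc_of_le hab] at hx
    have hB : |steklovMean ε ψ x| ≤ B :=
      abs_le_max_abs_abs ((hψ hx.1.le).trans (le_steklovMean_of_monotone hψ hε.1 x))
        ((steklovMean_le_of_monotone hψ hε.1 x).trans (hψ (by linarith [hx.2, hε.2])))
    rw [norm_pow, Real.norm_eq_abs]
    gcongr
    exact (abs_sub _ _).trans (by rw [abs_mul]; gcongr)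
  · apply Continuous.intervalIntegrable
    fun_prop
  · have hae : ∀ᵐ x, ContinuousAt ψ x := hψ.countable_not_continuousAt.measure_zero volume
    filter_upwards [hae] with x hx _
    exact (tendsto_const_nhds.sub
      ((tendsto_steklovMean_of_continuousAt hψ hx).mul_const (v x))).pow 2

theorem integral_sq_le_of_monotone_gap
    (hF : IsStrictSupersolution ω lam ((q - p) / 2) F F' F'') (hlam : 0 < lam)
    (hψ : Monotone ψ) (hgap : HasGapOn ω ψ (Icc p q)) (hpa : p < a) (hab : a ≤ b) (hbq : b < q)
    (hv : ContDiff ℝ 1 v) (hva : v a = 0) (hvb : v b = 0) :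
    lam * ∫ x in a..b, v x ^ 2 ≤ ∫ x in a..b, (deriv v x - ψ x * v x) ^ 2 := by
  have hψi : ∀ a b, IntervalIntegrable ψ volume a b := fun _ _ => hψ.intervalIntegrable
  refine ge_of_tendsto (tendsto_integral_sq_sub_steklovMean_mul hψ hv.continuous_deriv_one
    hv.continuous hab) ?_
  filter_upwards [Ioo_mem_nhdsGT (sub_pos.2 hbq)] with ε hε
  have hsub : Icc p (b + ε) ⊆ Icc p q := Icc_subset_Icc_right (by linarith [hε.2])
  exact integral_sq_le_of_continuous_gap (hF.mono (by linarith)) hlam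
    (continuous_steklovMean hψi) ((hgap.mono hsub).steklovMean hψi hε.1) hpa hab hv hva hvb

end Steklov

section IntegrationByParts

variable {ψ v w g : ℝ → ℝ} {ν : Measure ℝ} {a b : ℝ}

lemma setIntegral_intervalIntegral_eq (hab : a ≤ b) (hν : ν (Ioc a b) ≠ ∞)
    (hg : IntervalIntegrable g volume a b) :
    ∫ x in Ioc a b, (∫ t in x..b, g t) ∂ν = ∫ t in a..b, ν.real (Ioc a t) * g t := by
  have : IsFiniteMeasure (ν.restrict (Ioc a b)) := ⟨by simpa using hν.lt_top⟩
  have hkernel : Integrable (Function.uncurry fun x t => (Ici x).indicator g t)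
      ((ν.restrict (Ioc a b)).prod (volume.restrict (Ioc a b))) :=
    (((intervalIntegrable_iff_integrableOn_Ioc_of_le hab).1 hg).comp_snd _).indicator
      (measurableSet_le measurable_fst measurable_snd)
  calc ∫ x in Ioc a b, (∫ t in x..b, g t) ∂ν
      = ∫ x in Ioc a b, (∫ t in Ioc a b, (Ici x).indicator g t) ∂ν := by
        refine setIntegral_congr_fun measurableSet_Ioc fun x hx => ?_
        have hinter : Ioc a b ∩ Ici x = Icc x b := by
          ext t
          exact ⟨fun h => ⟨h.2, h.1.2⟩, fun h => ⟨⟨hx.1.trans_le h.1, h.2⟩, h.1⟩⟩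
        rw [setIntegral_indicator measurableSet_Ici, hinter, integral_Icc_eq_integral_Ioc,
          intervalIntegral.integral_of_le hx.2]
    _ = ∫ t in Ioc a b, (∫ x in Ioc a b, (Ici x).indicator g t ∂ν) :=
        integral_integral_swap hkernel
    _ = ∫ t in Ioc a b, ν.real (Ioc a t) * g t := by
        refine setIntegral_congr_fun measurableSet_Ioc fun t ht => ?_
        have hinter : Ioc a b ∩ Iic t = Ioc a t := by
          ext x
          exact ⟨fun h => ⟨h.1.1, h.2⟩, fun h => ⟨⟨h.1, h.2.trans ht.2⟩, h.2⟩⟩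
        have hflip : (fun x => (Ici x).indicator g t) = (Iic t).indicator fun _ => g t := by
          funext x
          simp only [indicator, mem_Ici, mem_Iic]
        rw [hflip, setIntegral_indicator measurableSet_Iic, hinter, setIntegral_const, smul_eq_mul]
    _ = ∫ t in a..b, ν.real (Ioc a t) * g t := (intervalIntegral.integral_of_le hab).symm

lemma setIntegral_eq_neg_integral_deriv_mul (hab : a ≤ b) (hψ : MonotoneOn ψ (Icc a b))
    (hν : ∀ t ∈ Icc a b, ν (Ioc a t) = ENNReal.ofReal (ψ t - ψ a))
    (hw : ContDiff ℝ 1 w) (hwa : w a = 0) (hwb : w b = 0) :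
    ∫ x in Ioc a b, w x ∂ν = -∫ x in a..b, ψ x * deriv w x := by
  have hw'i : ∀ x y, IntervalIntegrable (deriv w) volume x y :=
    hw.continuous_deriv_one.intervalIntegrable
  have hftc : ∀ x y, ∫ t in x..y, deriv w t = w y - w x := fun x y =>
    intervalIntegral.integral_deriv_eq_sub (fun t _ => hw.differentiable one_ne_zero t) (hw'i x y)
  have hψi : IntervalIntegrable (fun t => ψ t * deriv w t) volume a b :=
    (MonotoneOn.intervalIntegrable (by rwa [uIcc_of_le hab])).mul_continuousOn
      hw.continuous_deriv_one.continuousOn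
  have hfin : ν (Ioc a b) ≠ ∞ := by
    rw [hν b ⟨hab, le_rfl⟩]
    exact ENNReal.ofReal_ne_top
  calc ∫ x in Ioc a b, w x ∂ν
      = -∫ x in Ioc a b, (∫ t in x..b, deriv w t) ∂ν := by
        simp only [hftc, hwb, zero_sub, integral_neg, neg_neg]
    _ = -∫ t in a..b, ν.real (Ioc a t) * deriv w t := by
        rw [setIntegral_intervalIntegral_eq hab hfin (hw'i a b)]
    _ = -∫ t in a..b, (ψ t * deriv w t - ψ a * deriv w t) := by
        congr 1
        refine intervalIntegral.integral_congr fun t ht => ?_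
        rw [uIcc_of_le hab] at ht
        have hmono : 0 ≤ ψ t - ψ a := sub_nonneg.2 (hψ ⟨le_rfl, hab⟩ ht ht.1)
        simp only [measureReal_def, hν t ht, ENNReal.toReal_ofReal hmono, sub_mul]
    _ = -∫ t in a..b, ψ t * deriv w t := by
        rw [intervalIntegral.integral_sub hψi ((hw'i a b).const_mul _),
          intervalIntegral.integral_const_mul, hftc, hwa, hwb, sub_zero, mul_zero, sub_zero]

lemma intervalIntegrable_sq_of_monotoneOn (hab : a ≤ b) (hψ : MonotoneOn ψ (Icc a b)) :
    IntervalIntegrable (fun x => ψ x ^ 2) volume a b := by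
  have hψm : AEStronglyMeasurable ψ (volume.restrict (Ioc a b)) :=
    (aemeasurable_restrict_of_monotoneOn measurableSet_Ioc
      (hψ.mono Ioc_subset_Icc_self)).aestronglyMeasurable
  rw [intervalIntegrable_iff_integrableOn_Ioc_of_le hab]
  refine Integrable.of_bound (hψm.pow 2) (max |ψ a| |ψ b| ^ 2) ?_
  filter_upwards [ae_restrict_mem measurableSet_Ioc] with x hx
  have hx' := Ioc_subset_Icc_self hx
  rw [norm_pow, Real.norm_eq_abs]
  exact pow_le_pow_left₀ (abs_nonneg _) (abs_le_max_abs_abs (hψ ⟨le_rfl, hab⟩ hx' hx'.1)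
    (hψ hx' ⟨hab, le_rfl⟩ hx'.2)) 2

theorem integral_sq_deriv_sub_mul_eq (hab : a ≤ b) (hψ : MonotoneOn ψ (Icc a b))
    (hν : ∀ t ∈ Icc a b, ν (Ioc a t) = ENNReal.ofReal (ψ t - ψ a))
    (hv : ContDiff ℝ 1 v) (hva : v a = 0) (hvb : v b = 0) :
    ∫ x in a..b, (deriv v x - ψ x * v x) ^ 2 =
      (∫ x in a..b, deriv v x ^ 2) +
        ((∫ x in Ioc a b, v x ^ 2 ∂ν) + ∫ x in a..b, ψ x ^ 2 * v x ^ 2) := by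
  have hvc : Continuous v := hv.continuous
  have hv'c : Continuous (deriv v) := hv.continuous_deriv_one
  have hderiv : ∀ x, deriv (fun x => v x ^ 2) x = 2 * v x * deriv v x := fun x => by
    simpa using ((hv.differentiable one_ne_zero x).hasDerivAt.fun_pow 2).deriv
  have hibp : ∫ x in Ioc a b, v x ^ 2 ∂ν = -∫ x in a..b, ψ x * (2 * v x * deriv v x) := by
    rw [setIntegral_eq_neg_integral_deriv_mul hab hψ hν (hv.pow 2) (by simp [hva]) (by simp [hvb])]
    simp only [hderiv]
  have hψi : IntervalIntegrable ψ volume a b :=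
    MonotoneOn.intervalIntegrable (by rwa [uIcc_of_le hab])
  have hcross : IntervalIntegrable (fun x => ψ x * (2 * v x * deriv v x)) volume a b :=
    hψi.mul_continuousOn (by fun_prop)
  have hpot : IntervalIntegrable (fun x => ψ x ^ 2 * v x ^ 2) volume a b :=
    (intervalIntegrable_sq_of_monotoneOn hab hψ).mul_continuousOn (by fun_prop)
  have henergy : IntervalIntegrable (fun x => deriv v x ^ 2) volume a b :=
    (hv'c.pow 2).intervalIntegrable a b
  calc ∫ x in a..b, (deriv v x - ψ x * v x) ^ 2
      = ∫ x in a..b, (deriv v x ^ 2 - ψ x * (2 * v x * deriv v x) + ψ x ^ 2 * v x ^ 2) :=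
        intervalIntegral.integral_congr fun x _ => by ring
    _ = (∫ x in a..b, deriv v x ^ 2) - (∫ x in a..b, ψ x * (2 * v x * deriv v x)) +
          ∫ x in a..b, ψ x ^ 2 * v x ^ 2 := by
        rw [intervalIntegral.integral_add (henergy.sub hcross) hpot,
          intervalIntegral.integral_sub henergy hcross]
    _ = _ := by
        rw [hibp]
        ring

end IntegrationByParts

section TrigonometricSupersolution

variable {c h s : ℝ}

/-- The barrier of the comparison argument. The function `sin` satisfies
`y'' + 3 y = 2 tan s y'`; the two terms of order `c` buy the strict inequality with constant
`3 + 2 c`, the last one also positivity at `0`. -/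
def barrier (c s : ℝ) : ℝ :=
  (1 + c) * sin s - c * tan s + c / 8 * (1 / 5 - sin s ^ 2)

/-- The derivative of `barrier c`, where `cos s ≠ 0`. -/
def barrierDeriv (c s : ℝ) : ℝ :=
  (1 + c) * cos s - c / cos s ^ 2 - c / 4 * (sin s * cos s)

/-- The second derivative of `barrier c`, where `cos s ≠ 0`. -/
def barrierDeriv₂ (c s : ℝ) : ℝ :=
  -(1 + c) * sin s - 2 * c * sin s / cos s ^ 3 - c / 4 * (cos s ^ 2 - sin s ^ 2)

lemma hasDerivAt_barrier (hs : cos s ≠ 0) : HasDerivAt (barrier c) (barrierDeriv c s) s := by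
  refine ((((hasDerivAt_sin s).const_mul (1 + c)).sub ((hasDerivAt_tan hs).const_mul c)).add
    ((((hasDerivAt_sin s).pow 2).const_sub (1 / 5)).const_mul (c / 8))).congr_deriv ?_
  rw [barrierDeriv]
  push_cast
  ring

lemma hasDerivAt_barrierDeriv (hs : cos s ≠ 0) :
    HasDerivAt (barrierDeriv c) (barrierDeriv₂ c s) s := by
  refine ((((hasDerivAt_cos s).const_mul (1 + c)).sub
    (((hasDerivAt_const s c).div ((hasDerivAt_cos s).fun_pow 2) (pow_ne_zero 2 hs)))).sub
    (((hasDerivAt_sin s).mul (hasDerivAt_cos s)).const_mul (c / 4))).congr_deriv ?_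
  rw [barrierDeriv₂]
  field_simp
  ring

lemma barrierDeriv_pos (hc : 0 < c) (hs : 0 < cos s) (hcs : c ≤ cos s ^ 3) :
    0 < barrierDeriv c s := by
  have hdiv : c / cos s ^ 2 ≤ cos s := by
    rw [div_le_iff₀ (by positivity)]
    linarith
  have hcos : 0 < c * cos s := mul_pos hc hs
  have hsin : c * cos s * sin s ≤ c * cos s * 1 := by
    gcongr
    exact sin_le_one s
  rw [barrierDeriv]
  linarith

lemma barrier_strict (hc : 0 < c) (hc1 : c ≤ 1) (hsin : 0 ≤ sin s) (hs : 0 < cos s) :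
    (3 + 2 * c) * barrier c s + barrierDeriv₂ c s < 2 * tan s * barrierDeriv c s := by
  have htan : sin s ≤ tan s := by
    rw [tan_eq_sin_div_cos, le_div_iff₀ hs]
    exact mul_le_of_le_one_right hsin (cos_le_one s)
  have hresidual :
      2 * tan s * barrierDeriv c s -
        ((3 + 2 * c) * barrier c s + barrierDeriv₂ c s) =
      c * ((3 + 2 * c) * (tan s - sin s) + sin s +
        (1 + 2 / 5 * (1 - c) - (5 - 2 * c) * sin s ^ 2) / 8) := by
    rw [barrier, barrierDeriv, barrierDeriv₂, tan_eq_sin_div_cos]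
    field_simp
    rw [show cos s ^ 3 = cos s * (1 - sin s ^ 2) by rw [pow_succ', cos_sq'], cos_sq']
    ring
  have hbracket : 0 < (3 + 2 * c) * (tan s - sin s) + sin s +
      (1 + 2 / 5 * (1 - c) - (5 - 2 * c) * sin s ^ 2) / 8 := by
    have hsq : sin s ^ 2 ≤ sin s := pow_le_of_le_one hsin (sin_le_one s) two_ne_zero
    have h₁ : 0 ≤ (3 + 2 * c) * (tan s - sin s) := by
      apply mul_nonneg <;> linarith
    have h₂ : 0 ≤ c * sin s ^ 2 := by positivity
    linarith
  have := mul_pos hc hbracket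
  linarith

theorem isStrictSupersolution_barrier (hc : 0 < c) (hh : h < π / 2) (hch : c ≤ cos h ^ 3) :
    IsStrictSupersolution tan (3 + 2 * c) h (barrier c)
      (barrierDeriv c) (barrierDeriv₂ c) := by
  have hcos : ∀ s ∈ Icc 0 h, 0 < cos s := fun s hs =>
    cos_pos_of_mem_Ioo ⟨by linarith [hs.1, pi_pos], hs.2.trans_lt hh⟩
  have hderiv : ∀ s ∈ Icc 0 h, HasDerivAt (barrier c) _ s := fun s hs =>
    hasDerivAt_barrier (hcos s hs).ne'
  have hpos : ∀ s ∈ Icc 0 h, 0 < barrierDeriv c s := fun s hs => by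
    refine barrierDeriv_pos hc (hcos s hs) (hch.trans (pow_le_pow_left₀ ?_ ?_ 3))
    · exact (hcos h ⟨hs.1.trans hs.2, le_rfl⟩).le
    · exact cos_le_cos_of_nonneg_of_le_pi hs.1 (by linarith [pi_pos]) hs.2
  have hzero : 0 < barrier c 0 := by
    simp only [barrier, sin_zero, tan_zero]
    linarith
  have hmono : MonotoneOn (barrier c) (Icc 0 h) :=
    monotoneOn_of_deriv_nonneg (convex_Icc 0 h) (HasDerivAt.continuousOn hderiv)
      (fun s hs => (hderiv s (interior_subset hs)).differentiableAt.differentiableWithinAt)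
      fun s hs => by
        rw [(hderiv s (interior_subset hs)).deriv]
        exact (hpos s (interior_subset hs)).le
  refine ⟨hderiv, fun s hs => hasDerivAt_barrierDeriv (hcos s hs).ne', fun s hs => ?_,
    hpos, fun s hs => ?_⟩
  · exact hzero.trans_le (hmono ⟨le_rfl, hs.1.trans hs.2⟩ hs hs.1)
  · exact barrier_strict hc (hch.trans (pow_le_one₀ (hcos h ⟨hs.1.trans hs.2, le_rfl⟩).le
      (cos_le_one h))) (sin_nonneg_of_nonneg_of_le_pi hs.1 (by linarith [hs.2, pi_pos]))
      (hcos s hs)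

end TrigonometricSupersolution

section RayleighBound

variable {ψ v : ℝ → ℝ} {ν μ : Measure ℝ} {Λ : ℝ≥0∞} {lam p q a b : ℝ} {s t : Set ℝ}

/-- The estimate `Λ ≤ Rayleigh quotient of v` on `s` with potential `μ`, cleared of the
denominator. -/
def RayleighBound (Λ : ℝ≥0∞) (s : Set ℝ) (μ : Measure ℝ) (v : ℝ → ℝ) : Prop :=
  Λ * ∫⁻ x in s, ENNReal.ofReal (v x ^ 2) ≤
    (∫⁻ x in s, ENNReal.ofReal (deriv v x ^ 2)) + ∫⁻ x in s, ENNReal.ofReal (v x ^ 2) ∂μ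

lemma RayleighBound.mono_measure (h : RayleighBound Λ s ν v) (hνμ : ν.restrict s ≤ μ.restrict s) :
    RayleighBound Λ s μ v :=
  h.trans (add_le_add_right (lintegral_mono' hνμ le_rfl) _)

lemma RayleighBound.mono_set (h : RayleighBound Λ t μ v) (hts : t ⊆ s)
    (hv : ∀ x ∉ t, v x = 0) : RayleighBound Λ s μ v := by
  have hsupp : (fun x => ENNReal.ofReal (v x ^ 2)).support ⊆ t := fun x hx => by
    by_contra hxt
    exact hx (by simp [hv x hxt])
  have hmass : ∫⁻ x in s, ENNReal.ofReal (v x ^ 2) = ∫⁻ x in t, ENNReal.ofReal (v x ^ 2) := by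
    rw [setLIntegral_eq_of_support_subset hsupp,
      setLIntegral_eq_of_support_subset (hsupp.trans hts)]
  rw [RayleighBound, hmass]
  exact h.trans (add_le_add (lintegral_mono_set hts) (lintegral_mono_set hts))

lemma RayleighBound.mono_const {Λ' : ℝ≥0∞} (h : RayleighBound Λ s μ v) (hΛ : Λ' ≤ Λ) :
    RayleighBound Λ' s μ v :=
  (mul_le_mul_left hΛ _).trans h

lemma rayleighBound_of_integral_le (hab : a ≤ b) (hlam : 0 ≤ lam) (hν : ν (Ioc a b) ≠ ∞)
    (hψm : Measurable ψ) (hψ : IntervalIntegrable (fun x => ψ x ^ 2) volume a b)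
    (hv : ContDiff ℝ 1 v)
    (h : lam * ∫ x in a..b, v x ^ 2 ≤ (∫ x in a..b, deriv v x ^ 2) +
      ((∫ x in Ioc a b, v x ^ 2 ∂ν) + ∫ x in a..b, ψ x ^ 2 * v x ^ 2)) :
    RayleighBound (ENNReal.ofReal lam) (Ioc a b)
      (ν + volume.withDensity fun x => ENNReal.ofReal (ψ x ^ 2)) v := by
  have : IsFiniteMeasure (ν.restrict (Ioc a b)) := ⟨by simpa using hν.lt_top⟩
  have hvc : Continuous v := hv.continuous
  have hv'c : Continuous (deriv v) := hv.continuous_deriv_one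
  have hsqc : Continuous fun x => v x ^ 2 := hvc.pow 2
  have hmass : IntegrableOn (fun x => v x ^ 2) (Ioc a b) := hsqc.integrableOn_Ioc
  have hkinetic : IntegrableOn (fun x => deriv v x ^ 2) (Ioc a b) := (hv'c.pow 2).integrableOn_Ioc
  have hsing : IntegrableOn (fun x => v x ^ 2) (Ioc a b) ν := by
    obtain ⟨C, hC⟩ := isCompact_Icc.exists_bound_of_continuousOn hsqc.continuousOn
    refine Integrable.of_bound hsqc.aestronglyMeasurable C ?_
    filter_upwards [ae_restrict_mem measurableSet_Ioc] with x hx using hC x (Ioc_subset_Icc_self hx)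
  have hpot : IntegrableOn (fun x => ψ x ^ 2 * v x ^ 2) (Ioc a b) :=
    (intervalIntegrable_iff_integrableOn_Ioc_of_le hab).1 (hψ.mul_continuousOn hsqc.continuousOn)
  have hnonneg : ∀ (μ : Measure ℝ) (f : ℝ → ℝ), 0 ≤ᵐ[μ] fun x => f x ^ 2 := fun _ f =>
    Eventually.of_forall fun x => sq_nonneg (f x)
  have hpot_nonneg : ∀ x, 0 ≤ ψ x ^ 2 * v x ^ 2 := fun x => by positivity
  simp only [intervalIntegral.integral_of_le hab] at h
  have hENN := ENNReal.ofReal_le_ofReal h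
  rw [ENNReal.ofReal_mul hlam,
    ENNReal.ofReal_add (integral_nonneg fun x => sq_nonneg _)
      (add_nonneg (integral_nonneg fun x => sq_nonneg _) (integral_nonneg hpot_nonneg)),
    ENNReal.ofReal_add (integral_nonneg fun x => sq_nonneg _) (integral_nonneg hpot_nonneg),
    ofReal_integral_eq_lintegral_ofReal hmass (hnonneg _ _),
    ofReal_integral_eq_lintegral_ofReal hkinetic (hnonneg _ _),
    ofReal_integral_eq_lintegral_ofReal hsing (hnonneg _ _),
    ofReal_integral_eq_lintegral_ofReal hpot (Eventually.of_forall hpot_nonneg)] at hENN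
  have hdensity : ∫⁻ x in Ioc a b, ENNReal.ofReal (v x ^ 2)
        ∂(volume.withDensity fun x => ENNReal.ofReal (ψ x ^ 2)) =
      ∫⁻ x in Ioc a b, ENNReal.ofReal (ψ x ^ 2 * v x ^ 2) := by
    rw [setLIntegral_withDensity_eq_setLIntegral_mul volume (hψm.pow_const 2).ennreal_ofReal
      hsqc.measurable.ennreal_ofReal measurableSet_Ioc]
    simp only [Pi.mul_apply, ENNReal.ofReal_mul (sq_nonneg _)]
  rwa [RayleighBound, Measure.restrict_add, lintegral_add_measure, hdensity]

lemma PsiA.restrict_le_restrict_qM (P : PsiA) (ht : MeasurableSet t) (htP : t ⊆ P.dom)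
    (hψ : EqOn ψ P.psi t) :
    (P.nu + volume.withDensity fun x => ENNReal.ofReal (ψ x ^ 2)).restrict t ≤
      P.qM.restrict t := by
  have hdensity : (volume.restrict t).withDensity (fun x => ENNReal.ofReal (ψ x ^ 2)) =
      (volume.restrict t).withDensity fun x => ENNReal.ofReal (P.psi x ^ 2) := by
    refine withDensity_congr_ae ?_
    filter_upwards [ae_restrict_mem ht] with x hx
    rw [hψ hx]
  simp only [PsiA.qM, Measure.restrict_add, restrict_withDensity ht,
    Measure.restrict_restrict_of_subset htP, hdensity]
  exact Measure.le_add_right le_rfl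

theorem PsiA.rayleighBound_of_Icc_subset_dom (P : PsiA) (hpq : Icc p q ⊆ P.dom) (hpa : p < a)
    (hab : a ≤ b) (hbq : b < q) (hv : ContDiff ℝ 1 v) (hv0 : ∀ x ∉ Ioo a b, v x = 0) :
    RayleighBound (ENNReal.ofReal (3 + 2 * cos ((q - p) / 2) ^ 3)) (Ioo (-(π / 2)) (π / 2))
      P.qM v := by
  have hle : p ≤ q := by linarith
  have hp : p ∈ P.dom := hpq ⟨le_rfl, hle⟩
  have hq : q ∈ P.dom := hpq ⟨hle, le_rfl⟩
  have hdiam : (q - p) / 2 < π / 2 := by linarith [(P.domSub hp).1, (P.domSub hq).2]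
  have hcos : 0 < cos ((q - p) / 2) := cos_pos_of_mem_Ioo ⟨by linarith [pi_pos], hdiam⟩
  have hva : v a = 0 := hv0 a fun h => h.1.false
  have hvb : v b = 0 := hv0 b fun h => h.2.false
  obtain ⟨ψ, hψ, hψP⟩ := (P.mono.mono hpq).exists_monotone_extension
    ⟨P.psi p, forall_mem_image.2 fun x hx => P.mono hp (hpq hx) hx.1⟩
    ⟨P.psi q, forall_mem_image.2 fun x hx => P.mono (hpq hx) hq hx.2⟩
  have hgap : HasGapOn tan ψ (Icc p q) := (HasGapOn.mono P.gap hpq).congr hψP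
  have hsub : Icc a b ⊆ Icc p q := Icc_subset_Icc hpa.le hbq.le
  have hν : ∀ t ∈ Icc a b, P.nu (Ioc a t) = ENNReal.ofReal (ψ t - ψ a) := fun t ht => by
    have ha := hsub ⟨le_rfl, hab⟩
    rw [← hψP (hsub ht), ← hψP ha, P.nu_eq (hpq ha) (hpq (hsub ht)) ht.1]
  have hbound := integral_sq_le_of_monotone_gap
    (isStrictSupersolution_barrier (pow_pos hcos 3) hdiam le_rfl) (by positivity) hψ hgap
    hpa hab hbq hv hva hvb
  rw [integral_sq_deriv_sub_mul_eq hab (hψ.monotoneOn _) hν hv hva hvb] at hbound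
  have hJ : Ioc a b ⊆ Icc p q := Ioc_subset_Icc_self.trans hsub
  refine ((rayleighBound_of_integral_le hab (by positivity) ?_ hψ.measurable
    (intervalIntegrable_sq_of_monotoneOn hab (hψ.monotoneOn _)) hv hbound).mono_measure
    (P.restrict_le_restrict_qM measurableSet_Ioc (hJ.trans hpq) (hψP.symm.mono hJ))).mono_set
    ((hJ.trans hpq).trans P.domSub) fun x hx => hv0 x fun h => hx (Ioo_subset_Ioc_self h)
  rw [hν b ⟨hab, le_rfl⟩]
  exact ENNReal.ofReal_ne_top

end RayleighBound

section Truncation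

variable {v : ℝ → ℝ} {μ : Measure ℝ} {Λ : ℝ≥0∞} {p q ε : ℝ} {s : Set ℝ}

lemma exists_contDiff_truncation (hε : 0 < ε) :
    ∃ T : ℝ → ℝ, ContDiff ℝ 1 T ∧ (∀ t, |t| ≤ ε → T t = 0) ∧ (∀ t, |deriv T t| ≤ 1) ∧
      ∀ t, |T t - t| ≤ 4 * ε := by
  let κ : ContDiffBump (0 : ℝ) := ⟨ε, 2 * ε, hε, by linarith⟩
  let T : ℝ → ℝ := fun t => t - ∫ s in (0 : ℝ)..t, κ s
  have hT : ∀ t, HasDerivAt T (1 - κ t) t := fun t =>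
    (hasDerivAt_id t).sub (κ.continuous.integral_hasStrictDerivAt 0 t).hasDerivAt
  have hderiv : deriv T = fun t => 1 - κ t := funext fun t => (hT t).deriv
  refine ⟨T, contDiff_one_iff_deriv.2 ⟨fun t => (hT t).differentiableAt, ?_⟩, fun t ht => ?_,
    fun t => ?_, fun t => ?_⟩
  · rw [hderiv]
    exact continuous_const.sub κ.continuous
  · have hone : EqOn κ 1 (uIcc 0 t) := fun s hs => by
      refine κ.one_of_mem_closedBall (mem_closedBall_zero_iff.2 ?_)
      simpa using (abs_sub_left_of_mem_uIcc hs).trans (by simpa using ht)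
    simp only [T]
    rw [intervalIntegral.integral_congr hone]
    simp
  · rw [hderiv, abs_le]
    constructor <;> linarith [κ.nonneg (x := t), κ.le_one (x := t)]
  · calc |T t - t| = ‖∫ s in (0 : ℝ)..t, κ s‖ := by simp [T]
      _ ≤ ∫ s in uIoc 0 t, ‖κ s‖ := intervalIntegral.norm_integral_le_integral_norm_uIoc
      _ ≤ ∫ s, ‖κ s‖ := setIntegral_le_integral κ.integrable.norm
          (Eventually.of_forall fun s => norm_nonneg _)
      _ = ∫ s, κ s := integral_congr_ae (Eventually.of_forall fun s => abs_of_nonneg κ.nonneg)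
      _ ≤ volume.real (Metric.closedBall (0 : ℝ) (2 * ε)) := κ.integral_le_measure_closedBall volume
      _ = 4 * ε := by
        rw [measureReal_def, Real.volume_closedBall, ENNReal.toReal_ofReal (by positivity)]
        ring

lemma abs_le_abs_of_abs_deriv_le_one {T : ℝ → ℝ} (hT : Differentiable ℝ T) (hT0 : T 0 = 0)
    (hT' : ∀ t, |deriv T t| ≤ 1) (t : ℝ) : |T t| ≤ |t| := by
  simpa [hT0] using Convex.norm_image_sub_le_of_norm_deriv_le (fun x _ => hT x)
    (fun x _ => hT' x) convex_univ (mem_univ 0) (mem_univ t)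

lemma exists_Ioo_superset_of_isCompact {K : Set ℝ} (hK : IsCompact K) (hKpq : K ⊆ Ioo p q)
    (hpq : p < q) : ∃ a b, p < a ∧ a ≤ b ∧ b < q ∧ K ⊆ Ioo a b := by
  obtain ⟨m, hm⟩ := exists_between hpq
  have hsub : insert m K ⊆ Ioo p q := insert_subset hm hKpq
  obtain ⟨x, hx, hxK⟩ := (hK.insert m).exists_isLeast (insert_nonempty m K)
  obtain ⟨y, hy, hyK⟩ := (hK.insert m).exists_isGreatest (insert_nonempty m K)
  obtain ⟨a, hpa, hax⟩ := exists_between (hsub hx).1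
  obtain ⟨b, hyb, hbq⟩ := exists_between (hsub hy).2
  exact ⟨a, b, hpa, (hax.trans_le (hxK hy)).le.trans hyb.le, hbq, fun z hz =>
    ⟨hax.trans_le (hxK (mem_insert_of_mem m hz)), (hyK (mem_insert_of_mem m hz)).trans_lt hyb⟩⟩

lemma exists_Ioo_forall_notMem_abs_le (hpq : p < q) (hv : Continuous v)
    (hv0 : ∀ x ∉ Ioo p q, v x = 0) (hε : 0 < ε) :
    ∃ a b, p < a ∧ a ≤ b ∧ b < q ∧ ∀ x ∉ Ioo a b, |v x| ≤ ε := by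
  have hmem : ∀ x, ε ≤ |v x| → x ∈ Ioo p q := fun x hx => by
    by_contra hxpq
    rw [hv0 x hxpq, abs_zero] at hx
    exact hε.not_ge hx
  have hK : IsCompact (Icc p q ∩ {x | ε ≤ |v x|}) :=
    isCompact_Icc.inter_right (isClosed_le continuous_const hv.abs)
  obtain ⟨a, b, hpa, hab, hbq, hsub⟩ :=
    exists_Ioo_superset_of_isCompact hK (fun x hx => hmem x hx.2) hpq
  refine ⟨a, b, hpa, hab, hbq, fun x hx => ?_⟩
  by_contra! hlt
  exact hx (hsub ⟨Ioo_subset_Icc_self (hmem x hlt.le), hlt.le⟩)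

lemma setLIntegral_ofReal_sq_ne_top (hv : Continuous v) (hv0 : ∀ x ∉ Ioo p q, v x = 0) :
    ∫⁻ x in s, ENNReal.ofReal (v x ^ 2) ≠ ∞ := by
  have hsupp : HasCompactSupport fun x => v x ^ 2 :=
    HasCompactSupport.intro isCompact_Icc fun x hx => by
      rw [hv0 x fun h => hx (Ioo_subset_Icc_self h), zero_pow two_ne_zero]
  exact ((hv.pow 2).integrable_of_hasCompactSupport hsupp).restrict.lintegral_lt_top.ne

lemma RayleighBound.of_comp {T : ℝ → ℝ} (hT : Differentiable ℝ T) (hT0 : T 0 = 0)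
    (hT' : ∀ t, |deriv T t| ≤ 1) (hv : Differentiable ℝ v) (h : RayleighBound Λ s μ (T ∘ v)) :
    Λ * ∫⁻ x in s, ENNReal.ofReal (T (v x) ^ 2) ≤
      (∫⁻ x in s, ENNReal.ofReal (deriv v x ^ 2)) + ∫⁻ x in s, ENNReal.ofReal (v x ^ 2) ∂μ := by
  refine h.trans (add_le_add (lintegral_mono fun x => ?_) (lintegral_mono fun x => ?_)) <;>
    refine ENNReal.ofReal_le_ofReal (sq_le_sq.2 ?_)
  · rw [deriv_comp x (hT _) (hv x), abs_mul]
    exact mul_le_of_le_one_left (abs_nonneg _) (hT' _)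
  · exact abs_le_abs_of_abs_deriv_le_one hT hT0 hT' (v x)

lemma tendsto_lintegral_ofReal_sq {w : ℕ → ℝ → ℝ} (hw : ∀ n, Measurable (w n))
    (hle : ∀ n x, |w n x| ≤ |v x|) (hfin : ∫⁻ x, ENNReal.ofReal (v x ^ 2) ∂μ ≠ ∞)
    (hlim : ∀ x, Tendsto (fun n => w n x) atTop (nhds (v x))) :
    Tendsto (fun n => ∫⁻ x, ENNReal.ofReal (w n x ^ 2) ∂μ) atTop
      (nhds (∫⁻ x, ENNReal.ofReal (v x ^ 2) ∂μ)) :=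
  tendsto_lintegral_of_dominated_convergence (fun x => ENNReal.ofReal (v x ^ 2))
    (fun n => ((hw n).pow_const 2).ennreal_ofReal)
    (fun n => Eventually.of_forall fun x => ENNReal.ofReal_le_ofReal (sq_le_sq.2 (hle n x)))
    hfin (Eventually.of_forall fun x => ENNReal.tendsto_ofReal ((hlim x).pow 2))

theorem rayleighBound_of_forall_compactly_supported (hΛ : Λ ≠ ∞)
    (h : ∀ w : ℝ → ℝ, ContDiff ℝ 1 w → ∀ a b, p < a → a ≤ b → b < q →
      (∀ x ∉ Ioo a b, w x = 0) → RayleighBound Λ s μ w)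
    (hpq : p < q) (hv : ContDiff ℝ 1 v) (hv0 : ∀ x ∉ Ioo p q, v x = 0) :
    RayleighBound Λ s μ v := by
  have hvc : Continuous v := hv.continuous
  choose! T hT hTzero hT' hTclose using fun ε hε => exists_contDiff_truncation (ε := ε) hε
  let ε : ℕ → ℝ := fun n => 1 / (n + 1)
  have hε : ∀ n, 0 < ε n := fun n => Nat.one_div_pos_of_nat
  have hT0 : ∀ n, T (ε n) 0 = 0 := fun n => hTzero _ (hε n) 0 (by simpa using (hε n).le)
  have hbound : ∀ n, Λ * ∫⁻ x in s, ENNReal.ofReal (T (ε n) (v x) ^ 2) ≤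
      (∫⁻ x in s, ENNReal.ofReal (deriv v x ^ 2)) + ∫⁻ x in s, ENNReal.ofReal (v x ^ 2) ∂μ := by
    intro n
    refine RayleighBound.of_comp ((hT _ (hε n)).differentiable one_ne_zero) (hT0 n) (hT' _ (hε n))
      (hv.differentiable one_ne_zero) ?_
    obtain ⟨a, b, hpa, hab, hbq, hle⟩ := exists_Ioo_forall_notMem_abs_le hpq hvc hv0 (hε n)
    exact h _ ((hT _ (hε n)).comp hv) a b hpa hab hbq fun x hx => hTzero _ (hε n) _ (hle x hx)
  have hclose : ∀ x, Tendsto (fun n => T (ε n) (v x)) atTop (nhds (v x)) := fun x => by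
    have hlim : Tendsto (fun n => 4 * ε n) atTop (nhds 0) := by
      simpa [ε] using tendsto_one_div_add_atTop_nhds_zero_nat.const_mul (4 : ℝ)
    exact tendsto_iff_dist_tendsto_zero.2
      (squeeze_zero (fun n => dist_nonneg) (fun n => hTclose _ (hε n) (v x)) hlim)
  have htendsto := tendsto_lintegral_ofReal_sq (μ := volume.restrict s)
    (fun n => ((hT _ (hε n)).continuous.comp hvc).measurable)
    (fun n x => abs_le_abs_of_abs_deriv_le_one ((hT _ (hε n)).differentiable one_ne_zero)
      (hT0 n) (hT' _ (hε n)) (v x)) (setLIntegral_ofReal_sq_ne_top hvc hv0) hclose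
  exact le_of_tendsto' (ENNReal.Tendsto.const_mul htendsto (Or.inr hΛ)) hbound

end Truncation

section InfinitePotential

variable {v : ℝ → ℝ} {p q : ℝ}

theorem PsiA.rayleighBound_of_Ioo_subset_dom (P : PsiA) (hpq : Ioo p q ⊆ P.dom)
    (hv : ContDiff ℝ 1 v) (hv0 : ∀ x ∉ Ioo p q, v x = 0) :
    RayleighBound (ENNReal.ofReal (3 + 2 * cos ((q - p) / 2) ^ 3)) (Ioo (-(π / 2)) (π / 2))
      P.qM v := by
  rcases le_or_gt q p with hqp | hlt
  · have hzero : v = 0 := funext fun x => hv0 x (by simp [Ioo_eq_empty_of_le hqp])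
    simp [RayleighBound, hzero]
  have hdiam : q - p ≤ π := by
    have := (Ioo_subset_Ioo_iff hlt).1 (hpq.trans P.domSub)
    linarith
  refine rayleighBound_of_forall_compactly_supported ENNReal.ofReal_ne_top
    (fun w hw a b hpa hab hbq hw0 => ?_) hlt hv hv0
  obtain ⟨p', hpp', hp'a⟩ := exists_between hpa
  obtain ⟨q', hbq', hq'q⟩ := exists_between hbq
  have hcos : cos ((q - p) / 2) ^ 3 ≤ cos ((q' - p') / 2) ^ 3 :=
    (Odd.strictMono_pow (by decide)).monotone
      (cos_le_cos_of_nonneg_of_le_pi (by linarith) (by linarith [pi_pos]) (by linarith))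
  exact (P.rayleighBound_of_Icc_subset_dom ((Icc_subset_Ioo hpp' hq'q).trans hpq) hp'a hab hbq'
    hw hw0).mono_const (ENNReal.ofReal_le_ofReal (by linarith))

lemma eq_zero_of_setLIntegral_qM_ne_top (P : PsiA) (hdom : P.dom ⊆ Icc p q) (hv : Continuous v)
    (hv0 : ∀ x ∉ Ioo (-(π / 2)) (π / 2), v x = 0)
    (hfin : ∫⁻ x in Ioo (-(π / 2)) (π / 2), ENNReal.ofReal (v x ^ 2) ∂P.qM ≠ ∞) :
    ∀ x ∉ Ioo p q, v x = 0 := by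
  set I : Set ℝ := Ioo (-(π / 2)) (π / 2) with hI
  have hpenalty : (∞ : ℝ≥0∞) • volume.restrict (I \ P.dom) ≤ P.qM.restrict I := by
    rw [PsiA.qM, Measure.restrict_add, Measure.restrict_smul, ← hI,
      Measure.restrict_restrict measurableSet_Ioo, inter_eq_right.2 sdiff_subset]
    exact Measure.le_add_left le_rfl
  have hnull : ∫⁻ x in I \ P.dom, ENNReal.ofReal (v x ^ 2) = 0 := by
    by_contra hne
    refine hfin (top_unique ?_)
    rw [← ENNReal.top_mul hne, ← smul_eq_mul, ← lintegral_smul_measure]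
    exact lintegral_mono' hpenalty le_rfl
  have hae : v =ᵐ[volume.restrict (I \ Icc p q)] 0 := by
    refine ae_restrict_of_ae_restrict_of_subset (sdiff_subset_sdiff_right hdom) ?_
    filter_upwards [(lintegral_eq_zero_iff (hv.pow 2).measurable.ennreal_ofReal).1 hnull] with x hx
    exact pow_eq_zero_iff two_ne_zero |>.1
      ((ENNReal.ofReal_eq_zero.1 hx).antisymm (sq_nonneg _))
  have hopen : EqOn v 0 (I \ Icc p q) := Measure.eqOn_open_of_ae_eq hae
    (isOpen_Ioo.sdiff isClosed_Icc) hv.continuousOn continuousOn_const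
  have hcompl : EqOn v 0 (Icc p q)ᶜ := fun x hx => by
    by_cases hxI : x ∈ I
    · exact hopen ⟨hxI, hx⟩
    · exact hv0 x hxI
  have hclosure := hcompl.closure hv continuous_const
  rw [closure_compl, interior_Icc] at hclosure
  exact fun x hx => hclosure hx

end InfinitePotential

lemma exists_Ioo_subset_subset_Icc {s : Set ℝ} (hs : s.OrdConnected) (hbelow : BddBelow s)
    (habove : BddAbove s) :
    ∃ p q, Ioo p q ⊆ s ∧ s ⊆ Icc p q ∧ q - p = volume.real s := by
  obtain rfl | hne := s.eq_empty_or_nonempty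
  · exact ⟨0, 0, by simp⟩
  have hinner := IsConnected.Ioo_csInf_csSup_subset ⟨hne, hs.isPreconnected⟩ hbelow habove
  have houter := subset_Icc_csInf_csSup hbelow habove
  have hle : sInf s ≤ sSup s := csInf_le_csSup hne hbelow habove
  refine ⟨sInf s, sSup s, hinner, houter, ?_⟩
  have hlower := measureReal_mono (μ := volume) hinner
    (measure_ne_top_of_subset houter measure_Icc_lt_top.ne)
  have hupper := measureReal_mono (μ := volume) houter measure_Icc_lt_top.ne
  rw [Real.volume_real_Ioo_of_le hle] at hlower
  rw [Real.volume_real_Icc_of_le hle] at hupper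
  exact hlower.antisymm hupper

lemma le_lam1_of_forall_rayleighBound {a b : ℝ} {μ : Measure ℝ} {Λ : ℝ≥0∞}
    (h : ∀ v, TestFun a b v → ∫⁻ x in Ioo a b, ENNReal.ofReal (v x ^ 2) ∂μ ≠ ∞ →
      RayleighBound Λ (Ioo a b) μ v) : Λ ≤ lam1 a b μ := by
  refine le_iInf₂ fun v ⟨hv, hmass⟩ => ?_
  rw [dirRQ, ENNReal.le_div_iff_mul_le (Or.inl hmass)
    (Or.inl (setLIntegral_ofReal_sq_ne_top hv.1.continuous hv.2))]
  rcases eq_or_ne (∫⁻ x in Ioo a b, ENNReal.ofReal (v x ^ 2) ∂μ) ∞ with hinf | hfin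
  · rw [hinf, add_top]
    exact le_top
  · exact h v hv hfin

theorem PsiA.ofReal_le_lam1 (P : PsiA) :
    ENNReal.ofReal (3 + 2 * cos (volume.real P.dom / 2) ^ 3) ≤
      lam1 (-(π / 2)) (π / 2) P.qM := by
  obtain ⟨p, q, hinner, houter, hlen⟩ := exists_Ioo_subset_subset_Icc P.domConn
    (bddBelow_Ioo.mono P.domSub) (bddAbove_Ioo.mono P.domSub)
  rw [← hlen]
  exact le_lam1_of_forall_rayleighBound fun v hv hfin =>
    P.rayleighBound_of_Ioo_subset_dom hinner hv.1
      (eq_zero_of_setLIntegral_qM_ne_top P houter hv.1.continuous hv.2 hfin)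

lemma one_sub_div_pi_le_cos_half {d : ℝ} (hd0 : 0 ≤ d) (hd : d ≤ π) :
    (π - d) / π ≤ cos (d / 2) := by
  rw [← sin_pi_div_two_sub]
  refine (mul_le_sin (by linarith : 0 ≤ π / 2 - d / 2) (by linarith)).trans' (le_of_eq ?_)
  field_simp

theorem refined_lower_bound_small_domain_general :
    ∃ C : ℝ, 0 < C ∧ ∀ P : PsiA,
      3 + ENNReal.ofReal (C * (π - volume.real P.dom) ^ 3) ≤ lam1 (-(π / 2)) (π / 2) P.qM := by
  refine ⟨2 / π ^ 3, by positivity, fun P => le_trans ?_ P.ofReal_le_lam1⟩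
  have hlen : volume.real P.dom ≤ π := by
    have h := measureReal_mono (μ := volume) P.domSub measure_Ioo_lt_top.ne
    rw [Real.volume_real_Ioo_of_le (by linarith [pi_pos])] at h
    linarith
  have hbase : 0 ≤ (π - volume.real P.dom) / π := div_nonneg (sub_nonneg.2 hlen) pi_pos.le
  have hcube := pow_le_pow_left₀ hbase (one_sub_div_pi_le_cos_half measureReal_nonneg hlen) 3
  calc 3 + ENNReal.ofReal (2 / π ^ 3 * (π - volume.real P.dom) ^ 3)
      = ENNReal.ofReal (3 + 2 * ((π - volume.real P.dom) / π) ^ 3) := by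
        rw [ENNReal.ofReal_add (by norm_num) (by positivity), ENNReal.ofReal_ofNat, div_pow,
          ← mul_div_assoc, div_mul_eq_mul_div]
    _ ≤ ENNReal.ofReal (3 + 2 * cos (volume.real P.dom / 2) ^ 3) :=
        ENNReal.ofReal_le_ofReal (by linarith)

/-- Theorem 2.8 (i) / `t:1dextra` (i): there exists an absolute constant
`C > 0` such that, for any `q = ψ' + ψ²` with `ψ ∈ 𝒜(I_π)` whose finiteness domain is
`I_d = (-d/2, d/2)` with `d ≤ π`, it holds `λ₁(I_d, q) ≥ 3 + C (π - d)³`. -/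
theorem refined_lower_bound_small_domain :
    ∃ C : ℝ, 0 < C ∧
      ∀ d : ℝ, 0 < d → d ≤ π →
        ∀ P : PsiA, P.dom = Ioo (-(d / 2)) (d / 2) →
          3 + ENNReal.ofReal (C * (π - d) ^ 3) ≤ lam1 (-(π / 2)) (π / 2) P.qM := by
  obtain ⟨C, hC, hbound⟩ := refined_lower_bound_small_domain_general
  refine ⟨C, hC, fun d hd _ P hdom => ?_⟩
  simpa [hdom, hd.le, Real.volume_real_Ioo_of_le] using hbound P
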